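/- arXiv:math/0606734 — 3 statements merged into one kernel-verified Lean document; each statement's English description precedes it below -/
import Mathlib

section
/- Let n ≥ 2, let 0 < θ ≤ 2φ and 0 < φ ≤ π/2. Then A(n,θ,φ) ≤ m(n, 2·sin(θ/2)/sin φ). -/
noncomputable section

/-- The "North pole" `(0, …, 0, 1)` of the unit sphere in `ℝ^n`. -/
def north (n : ℕ) : EuclideanSpace ℝ (Fin n) :=
  if h : 0 < n then EuclideanSpace.single ⟨n - 1, Nat.sub_lt h Nat.one_pos⟩ 1 else 0

/-- Angular distance between two points: `arccos ⟨x, y⟩`. -/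
def aDist {n : ℕ} (x y : EuclideanSpace ℝ (Fin n)) : ℝ := Real.arccos (inner ℝ x y : ℝ)

/-- A finite set of unit vectors with pairwise angular distance at least `θ`. -/
def IsCode {n : ℕ} (θ : ℝ) (C : Finset (EuclideanSpace ℝ (Fin n))) : Prop :=
  (∀ x ∈ C, ‖x‖ = 1) ∧ ∀ x ∈ C, ∀ y ∈ C, x ≠ y → θ ≤ aDist x y

/-- `A(n, θ)`: maximal size of a `θ`-code on the unit sphere `S^{n-1} ⊂ ℝ^n`. -/
def sphereMax (n : ℕ) (θ : ℝ) : ℕ :=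
  sSup {M | ∃ C : Finset (EuclideanSpace ℝ (Fin n)), IsCode θ C ∧ C.card = M}

/-- `A(n, θ, φ)`: maximal size of a `θ`-code in the cap of angular radius `φ` about the
North pole. -/
def capMax (n : ℕ) (θ φ : ℝ) : ℕ :=
  sSup {M | ∃ C : Finset (EuclideanSpace ℝ (Fin n)), IsCode θ C ∧
    (∀ x ∈ C, aDist x (north n) ≤ φ) ∧ C.card = M}

/-- `A(n, θ, [ψ, φ])`: maximal size of a `θ`-code in the strip `Z(n, [ψ, φ])`. -/
def stripMax (n : ℕ) (θ ψ φ : ℝ) : ℕ :=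
  sSup {M | ∃ C : Finset (EuclideanSpace ℝ (Fin n)), IsCode θ C ∧
    (∀ x ∈ C, ψ ≤ aDist x (north n) ∧ aDist x (north n) ≤ φ) ∧ C.card = M}

/-- `m(n, d)`: maximal number of points in the closed unit ball of `ℝ^n` with pairwise
Euclidean distances at least `d`. -/
def ballMax (n : ℕ) (d : ℝ) : ℕ :=
  sSup {M | ∃ C : Finset (EuclideanSpace ℝ (Fin n)), (∀ x ∈ C, ‖x‖ ≤ 1) ∧
    (∀ x ∈ C, ∀ y ∈ C, x ≠ y → d ≤ dist x y) ∧ C.card = M}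

/-- `ω(θ, α, β) = arccos((cos θ - cos α cos β) / (sin α sin β))`. -/
def omega2 (θ α β : ℝ) : ℝ :=
  Real.arccos ((Real.cos θ - Real.cos α * Real.cos β) / (Real.sin α * Real.sin β))

/-- `ω(θ, α) := ω(θ, α, α)`. -/
def omega1 (θ α : ℝ) : ℝ := omega2 θ α α

end

/-! The cap of angular radius `φ ≤ π / 2` about `e` lies in the Euclidean ball of radius `sin φ`
centred at `cos φ • e`, the centre of the sphere bounding the cap. The homothety taking this ball
to the unit ball divides distances by `sin φ`, and distinct points of a `θ`-code have chordal
distance at least `2 sin (θ / 2)`. -/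

open Metric Real InnerProductGeometry
open scoped NNReal

section Packing

variable {X : Type*} [PseudoMetricSpace X] {A : Set X}

theorem packingNumber_ne_top_of_totallyBounded {ε : ℝ≥0} (hε : ε ≠ 0) (hA : TotallyBounded A) :
    packingNumber ε A ≠ ⊤ := by
  obtain ⟨N, -, hN, hcover⟩ := exists_finite_isCover_of_totallyBounded (half_pos hε.bot_lt).ne' hA
  refine ne_top_of_le_ne_top hN.encard_lt_top.ne ?_
  calc packingNumber ε A = packingNumber (2 * (ε / 2)) A := by rw [mul_div_cancel₀ ε two_ne_zero]
    _ ≤ externalCoveringNumber (ε / 2) A := packingNumber_two_mul_le_externalCoveringNumber _ _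
    _ ≤ N.encard := hcover.externalCoveringNumber_le_encard

theorem isSeparated_of_forall_lt_dist {ε : ℝ≥0} (h : ∀ x ∈ A, ∀ y ∈ A, x ≠ y → ε < dist x y) :
    IsSeparated ε A := by
  intro x hx y hy hxy
  rw [edist_nndist, ENNReal.coe_lt_coe, ← NNReal.coe_lt_coe, coe_nndist]
  exact h x hx y hy hxy

theorem exists_card_le_of_totallyBounded (hA : TotallyBounded A) {d : ℝ} (hd : 0 < d) :
    ∃ N : ℕ, ∀ C : Finset X, (∀ x ∈ C, x ∈ A) →
      (∀ x ∈ C, ∀ y ∈ C, x ≠ y → d ≤ dist x y) → C.card ≤ N := by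
  lift d to ℝ≥0 using hd.le
  rw [NNReal.coe_pos] at hd
  obtain ⟨N, hN⟩ := ENat.ne_top_iff_exists.1
    (packingNumber_ne_top_of_totallyBounded (half_pos hd).ne' hA)
  refine ⟨N, fun C hCA hC ↦ ?_⟩
  have hsep : IsSeparated (d / 2 : ℝ≥0) (C : Set X) := isSeparated_of_forall_lt_dist
    fun x hx y hy hxy ↦ (NNReal.coe_lt_coe.2 (half_lt_self hd)).trans_le (hC x hx y hy hxy)
  have hcard := hsep.encard_le_packingNumber hCA
  rwa [← hN, Set.encard_coe_eq_coe_finsetCard, Nat.cast_le] at hcard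

end Packing

section Cap

variable {V : Type*} [NormedAddCommGroup V] [InnerProductSpace ℝ V] {x y e : V} {φ : ℝ}

theorem norm_sub_eq_two_mul_sin_half_angle (hx : ‖x‖ = 1) (hy : ‖y‖ = 1) :
    ‖x - y‖ = 2 * sin (angle x y / 2) := by
  have hsin : 0 ≤ sin (angle x y / 2) := sin_nonneg_of_nonneg_of_le_pi
    (by linarith [angle_nonneg x y]) (by linarith [angle_le_pi x y, pi_pos])
  rw [← sq_eq_sq₀ (norm_nonneg _) (by positivity)]
  calc ‖x - y‖ ^ 2 = 2 - 2 * cos (angle x y) := by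
        rw [norm_sub_sq_real, inner_eq_cos_angle_of_norm_eq_one hx hy, hx, hy]
        ring
    _ = (2 * sin (angle x y / 2)) ^ 2 := by
        rw [mul_pow, sin_sq_eq_half_sub, mul_div_cancel₀ _ two_ne_zero]
        ring

theorem norm_sub_cos_smul_le_sin (hx : ‖x‖ = 1) (he : ‖e‖ = 1) (hφ : φ ≤ π / 2)
    (hxe : angle x e ≤ φ) : ‖x - cos φ • e‖ ≤ sin φ := by
  have hφ0 : 0 ≤ φ := (angle_nonneg x e).trans hxe
  have hcos : 0 ≤ cos φ := cos_nonneg_of_mem_Icc ⟨by linarith [pi_pos], hφ⟩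
  have hcos_le : cos φ ≤ cos (angle x e) :=
    cos_le_cos_of_nonneg_of_le_pi (angle_nonneg x e) (by linarith [pi_pos]) hxe
  rw [← sq_le_sq₀ (norm_nonneg _) (sin_nonneg_of_nonneg_of_le_pi hφ0 (by linarith [pi_pos]))]
  calc ‖x - cos φ • e‖ ^ 2 = 1 - 2 * (cos φ * cos (angle x e)) + cos φ ^ 2 := by
        rw [norm_sub_sq_real, real_inner_smul_right, inner_eq_cos_angle_of_norm_eq_one hx he,
          norm_smul, hx, he, mul_one, norm_eq_abs, sq_abs, one_pow]
    _ ≤ 1 - 2 * (cos φ * cos φ) + cos φ ^ 2 := by gcongr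
    _ = sin φ ^ 2 := by
        rw [sin_sq]
        ring

/-- The homothety of ratio `1 / sin φ` taking the ball of radius `sin φ` about `cos φ • e` to the
unit ball; it embeds the cap of angular radius `φ` about `e` into the unit ball. -/
noncomputable def capToBall (φ : ℝ) (e x : V) : V := (sin φ)⁻¹ • (x - cos φ • e)

theorem dist_capToBall (hφ : 0 ≤ sin φ) (e x y : V) :
    dist (capToBall φ e x) (capToBall φ e y) = dist x y / sin φ := by
  rw [capToBall, capToBall, dist_smul₀, dist_sub_right, norm_inv, norm_of_nonneg hφ,
    inv_mul_eq_div]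

theorem capToBall_injective (hφ : sin φ ≠ 0) (e : V) : Function.Injective (capToBall φ e) :=
  (smul_right_injective V (inv_ne_zero hφ)).comp sub_left_injective

theorem norm_capToBall_le_one (hx : ‖x‖ = 1) (he : ‖e‖ = 1) (hφ : φ ≤ π / 2)
    (hxe : angle x e ≤ φ) : ‖capToBall φ e x‖ ≤ 1 := by
  have hle := norm_sub_cos_smul_le_sin hx he hφ hxe
  have hsin : 0 ≤ sin φ := (norm_nonneg _).trans hle
  rw [capToBall, norm_smul, norm_inv, norm_of_nonneg hsin, inv_mul_eq_div]
  exact div_le_one_of_le₀ hle hsin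

end Cap

section Codes

variable {n : ℕ} {θ φ : ℝ} {C : Finset (EuclideanSpace ℝ (Fin n))}

theorem norm_north (hn : 0 < n) : ‖north n‖ = 1 := by
  simp [north, hn]

theorem aDist_eq_angle {x y : EuclideanSpace ℝ (Fin n)} (hx : ‖x‖ = 1) (hy : ‖y‖ = 1) :
    aDist x y = angle x y := by
  rw [aDist, angle, hx, hy, mul_one, div_one]

theorem IsCode.two_mul_sin_half_le_dist (hC : IsCode θ C) (hθ : 0 ≤ θ)
    {x y : EuclideanSpace ℝ (Fin n)} (hx : x ∈ C) (hy : y ∈ C) (hxy : x ≠ y) :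
    2 * sin (θ / 2) ≤ dist x y := by
  have hangle : θ ≤ angle x y :=
    (hC.2 x hx y hy hxy).trans_eq (aDist_eq_angle (hC.1 x hx) (hC.1 y hy))
  rw [dist_eq_norm, norm_sub_eq_two_mul_sin_half_angle (hC.1 x hx) (hC.1 y hy)]
  gcongr
  exact sin_le_sin_of_le_of_le_pi_div_two (by linarith [pi_pos])
    (by linarith [angle_le_pi x y]) (by linarith)

theorem capMax_le {m : ℕ} (h : ∀ C : Finset (EuclideanSpace ℝ (Fin n)), IsCode θ C →
    (∀ x ∈ C, aDist x (north n) ≤ φ) → C.card ≤ m) : capMax n θ φ ≤ m := by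
  refine csSup_le ⟨0, ∅, by simp [IsCode]⟩ ?_
  rintro _ ⟨C, hC, hcap, rfl⟩
  exact h C hC hcap

theorem card_le_ballMax_of_forall_le_dist {d : ℝ} (hd : 0 < d) (hball : ∀ x ∈ C, ‖x‖ ≤ 1)
    (hsep : ∀ x ∈ C, ∀ y ∈ C, x ≠ y → d ≤ dist x y) : C.card ≤ ballMax n d := by
  obtain ⟨N, hN⟩ := exists_card_le_of_totallyBounded
    (isCompact_closedBall (0 : EuclideanSpace ℝ (Fin n)) 1).totallyBounded hd
  refine le_csSup ⟨N, ?_⟩ ⟨C, hball, hsep, rfl⟩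
  rintro _ ⟨D, hDball, hDsep, rfl⟩
  exact hN D (fun x hx ↦ mem_closedBall_zero_iff.2 (hDball x hx)) hDsep

theorem IsCode.card_le_ballMax (hC : IsCode θ C) (hθ : 0 < θ) (hθ' : θ < 2 * π) (hφ : 0 < φ)
    (hφ' : φ ≤ π / 2) {e : EuclideanSpace ℝ (Fin n)} (he : ‖e‖ = 1)
    (hcap : ∀ x ∈ C, aDist x e ≤ φ) : C.card ≤ ballMax n (2 * sin (θ / 2) / sin φ) := by
  have hsinφ : 0 < sin φ := sin_pos_of_pos_of_lt_pi hφ (by linarith [pi_pos])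
  have hsinθ : 0 < sin (θ / 2) := sin_pos_of_pos_of_lt_pi (by linarith) (by linarith)
  rw [← C.card_map ⟨capToBall φ e, capToBall_injective hsinφ.ne' e⟩]
  refine card_le_ballMax_of_forall_le_dist (by positivity) (Finset.forall_mem_map.2 fun x hx ↦ ?_)
    (Finset.forall_mem_map.2 fun x hx ↦ Finset.forall_mem_map.2 fun y hy hxy ↦ ?_)
  · exact norm_capToBall_le_one (hC.1 x hx) he hφ'
      ((aDist_eq_angle (hC.1 x hx) he).symm.trans_le (hcap x hx))
  · rw [Function.Embedding.coeFn_mk, dist_capToBall hsinφ.le]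
    gcongr
    exact hC.two_mul_sin_half_le_dist hθ.le hx hy (ne_of_apply_ne _ hxy)

end Codes

theorem stmt0 (n : ℕ) (hn : 2 ≤ n) (θ φ : ℝ) (hθ : 0 < θ) (hθφ : θ ≤ 2 * φ)
    (hφ : 0 < φ) (hφ2 : φ ≤ Real.pi / 2) :
    capMax n θ φ ≤ ballMax n (2 * Real.sin (θ / 2) / Real.sin φ) :=
  capMax_le fun _ hC hcap ↦ hC.card_le_ballMax hθ (by linarith [pi_pos]) hφ hφ2
    (norm_north (by lia)) hcap
end

section
/- Let n ≥ 3, let 0 ≤ ψ < φ ≤ π/2 and 0 < θ ≤ 2φ. Then A(n,θ,φ) ≥ A(n,θ,[ψ,φ]) ≥ A(n−1, ω(θ,φ)), where A(n−1,·) refers to codes on the unit sphere S^{n−2} ⊂ ℝ^{n−1}. -/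
/-!
A code on `S^{n-2}` is lifted to the parallel of colatitude `φ` in `S^{n-1}`, which bounds the
strip. By the spherical law of cosines, lifted points are at angle `θ` exactly when the original
points are at angle `ω(θ, φ)`, so the lift turns `ω(θ, φ)`-codes into `θ`-codes. Cardinalities of
`θ`-codes are bounded because the sphere is compact and chords are at least `2 / π` times their
arcs; without such a bound the supremum in `ℕ` would be the junk value `0`.
-/

open Metric Real Set
open scoped NNReal

theorem packingNumber_ne_top_of_isCompact {X : Type*} [PseudoEMetricSpace X] {s : Set X}
    (hs : IsCompact s) {ε : ℝ≥0} (hε : ε ≠ 0) : packingNumber ε s ≠ ⊤ := by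
  obtain ⟨N, -, hN, hcover⟩ := exists_finite_isCover_of_isCompact (half_pos hε.bot_lt).ne' hs
  have hle := (packingNumber_two_mul_le_externalCoveringNumber (ε / 2) s).trans
    hcover.externalCoveringNumber_le_encard
  rw [mul_div_cancel₀ ε two_ne_zero] at hle
  exact (hle.trans_lt hN.encard_lt_top).ne

theorem cos_le_cos_of_le_of_add_le_two_pi {θ s : ℝ} (hθ : 0 ≤ θ) (hle : θ ≤ s)
    (hadd : s + θ ≤ 2 * π) : cos s ≤ cos θ := by
  have hsin_add : 0 ≤ sin ((s + θ) / 2) := sin_nonneg_of_nonneg_of_le_pi (by linarith) (by linarith)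
  have hsin_sub : 0 ≤ sin ((s - θ) / 2) := sin_nonneg_of_nonneg_of_le_pi (by linarith) (by linarith)
  linarith [cos_sub_cos s θ, mul_nonneg hsin_add hsin_sub]

section AngularDistance

variable {n : ℕ} {x y : EuclideanSpace ℝ (Fin n)}

theorem cos_aDist (hx : ‖x‖ = 1) (hy : ‖y‖ = 1) : cos (aDist x y) = inner ℝ x y :=
  cos_arccos (neg_one_le_real_inner_of_norm_eq_one hx hy)
    (real_inner_le_one_of_norm_eq_one hx hy)

theorem two_div_pi_mul_aDist_le_dist (hx : ‖x‖ = 1) (hy : ‖y‖ = 1) :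
    2 / π * aDist x y ≤ dist x y := by
  have hcos : inner ℝ x y ≤ 1 - 2 / π ^ 2 * aDist x y ^ 2 := by
    rw [← cos_aDist hx hy]
    refine cos_le_one_sub_mul_cos_sq ?_
    exact (abs_of_nonneg (arccos_nonneg _)).trans_le (arccos_le_pi _)
  refine le_of_sq_le_sq ?_ dist_nonneg
  calc (2 / π * aDist x y) ^ 2
      = 2 * (2 / π ^ 2 * aDist x y ^ 2) := by ring
    _ ≤ 2 - 2 * inner ℝ x y := by linarith
    _ = dist x y ^ 2 := by rw [dist_eq_norm, norm_sub_sq_real, hx, hy]; ring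

theorem inner_le_of_arccos_le_aDist {a : ℝ} (ha : -1 ≤ a) (hx : ‖x‖ = 1) (hy : ‖y‖ = 1)
    (h : arccos a ≤ aDist x y) : inner ℝ x y ≤ a := by
  contrapose! h
  exact arccos_lt_arccos ha h (real_inner_le_one_of_norm_eq_one hx hy)

end AngularDistance

section CodeSize

variable {n : ℕ} {θ : ℝ} {C : Finset (EuclideanSpace ℝ (Fin n))}

theorem IsCode.isSeparated (hC : IsCode θ C) {ε : ℝ≥0} (hε : ε < 2 / π * θ) :
    IsSeparated ε (C : Set (EuclideanSpace ℝ (Fin n))) := by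
  intro x hx y hy hxy
  have hdist : (ε : ℝ) < dist x y :=
    calc (ε : ℝ) < 2 / π * θ := hε
      _ ≤ 2 / π * aDist x y := by gcongr; exact hC.2 x hx y hy hxy
      _ ≤ dist x y := two_div_pi_mul_aDist_le_dist (hC.1 x hx) (hC.1 y hy)
  rw [edist_nndist]
  exact_mod_cast hdist

theorem bddAbove_card_isCode (n : ℕ) (hθ : 0 < θ) :
    BddAbove {M | ∃ C : Finset (EuclideanSpace ℝ (Fin n)), IsCode θ C ∧ C.card = M} := by
  obtain ⟨ε, hε, hεθ⟩ := exists_between (show 0 < 2 / π * θ by positivity)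
  lift ε to ℝ≥0 using hε.le
  have hfin : packingNumber ε (sphere (0 : EuclideanSpace ℝ (Fin n)) 1) ≠ ⊤ :=
    packingNumber_ne_top_of_isCompact (isCompact_sphere 0 1) (by exact_mod_cast hε.ne')
  obtain ⟨N, hN⟩ := ENat.ne_top_iff_exists.mp hfin
  refine ⟨N, ?_⟩
  rintro _ ⟨C, hC, rfl⟩
  have hsphere : (C : Set (EuclideanSpace ℝ (Fin n))) ⊆ sphere 0 1 :=
    fun x hx => mem_sphere_zero_iff_norm.mpr (hC.1 x hx)
  have hcard := (hC.isSeparated hεθ).encard_le_packingNumber hsphere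
  rw [← hN, encard_coe_eq_coe_finsetCard] at hcard
  exact_mod_cast hcard

theorem IsCode.card_le_capMax {φ : ℝ} (hC : IsCode θ C) (hθ : 0 < θ)
    (hcap : ∀ x ∈ C, aDist x (north n) ≤ φ) : C.card ≤ capMax n θ φ := by
  refine le_csSup ((bddAbove_card_isCode n hθ).mono ?_) ⟨C, hC, hcap, rfl⟩
  rintro _ ⟨D, hD, -, rfl⟩
  exact ⟨D, hD, rfl⟩

theorem IsCode.card_le_stripMax {ψ φ : ℝ} (hC : IsCode θ C) (hθ : 0 < θ)
    (hstrip : ∀ x ∈ C, ψ ≤ aDist x (north n) ∧ aDist x (north n) ≤ φ) :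
    C.card ≤ stripMax n θ ψ φ := by
  refine le_csSup ((bddAbove_card_isCode n hθ).mono ?_) ⟨C, hC, hstrip, rfl⟩
  rintro _ ⟨D, hD, -, rfl⟩
  exact ⟨D, hD, rfl⟩

theorem stripMax_le_capMax (n : ℕ) (ψ φ : ℝ) (hθ : 0 < θ) :
    stripMax n θ ψ φ ≤ capMax n θ φ := by
  refine csSup_le' ?_
  rintro _ ⟨C, hC, hstrip, rfl⟩
  exact hC.card_le_capMax hθ fun x hx => (hstrip x hx).2

end CodeSize

section ColatitudeLift

variable {m : ℕ} {θ α β φ : ℝ} {x y : EuclideanSpace ℝ (Fin m)}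

/-- The point of `ℝ^{m+1}` with coordinates `(sin φ • x, cos φ)`. For `x` on the unit sphere it is
the point of the sphere one dimension higher that has longitude `x` and angle `φ` from the
North pole. -/
noncomputable def colatitudeLift (φ : ℝ) (x : EuclideanSpace ℝ (Fin m)) :
    EuclideanSpace ℝ (Fin (m + 1)) :=
  WithLp.toLp 2 (Fin.snoc (fun i => sin φ * x i) (cos φ) : Fin (m + 1) → ℝ)

theorem inner_colatitudeLift (α β : ℝ) (x y : EuclideanSpace ℝ (Fin m)) :
    inner ℝ (colatitudeLift α x) (colatitudeLift β y) =
      sin α * sin β * inner ℝ x y + cos α * cos β := by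
  simp only [colatitudeLift, PiLp.inner_apply, Fin.sum_univ_castSucc, Fin.snoc_castSucc,
    Fin.snoc_last, Finset.mul_sum, RCLike.inner_apply, conj_trivial]
  congr 1
  · exact Finset.sum_congr rfl fun i _ => by ring
  · ring

theorem norm_colatitudeLift (φ : ℝ) (hx : ‖x‖ = 1) : ‖colatitudeLift φ x‖ = 1 := by
  rw [← sq_eq_sq₀ (norm_nonneg _) zero_le_one, ← real_inner_self_eq_norm_sq, inner_colatitudeLift,
    inner_self_eq_one_of_norm_eq_one hx]
  linarith [sin_sq_add_cos_sq φ]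

theorem colatitudeLift_injective (hφ : sin φ ≠ 0) :
    Function.Injective (colatitudeLift (m := m) φ) := by
  intro x y h
  ext i
  have hi := congrArg (fun v : EuclideanSpace ℝ (Fin (m + 1)) => v i.castSucc) h
  simpa [colatitudeLift, hφ] using hi

theorem north_succ (m : ℕ) : north (m + 1) = EuclideanSpace.single (Fin.last m) 1 :=
  dif_pos m.succ_pos

theorem aDist_colatitudeLift_north (h0 : 0 ≤ φ) (hπ : φ ≤ π) (x : EuclideanSpace ℝ (Fin m)) :
    aDist (colatitudeLift φ x) (north (m + 1)) = φ := by
  refine arccos_eq_of_eq_cos h0 hπ ?_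
  rw [north_succ, EuclideanSpace.inner_single_right]
  simp [colatitudeLift]

-- The bounds on `α + β` are triangle inequalities: they put the argument of the `arccos` defining
-- `omega2 θ α β` above `-1`, so that it is not clamped to `π`.
theorem le_aDist_colatitudeLift (hα : 0 < sin α) (hβ : 0 < sin β) (hθ : 0 ≤ θ)
    (hle : θ ≤ α + β) (hadd : α + β + θ ≤ 2 * π) (hx : ‖x‖ = 1) (hy : ‖y‖ = 1)
    (h : omega2 θ α β ≤ aDist x y) :
    θ ≤ aDist (colatitudeLift α x) (colatitudeLift β y) := by
  have hs : 0 < sin α * sin β := mul_pos hα hβ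
  have hcos : cos α * cos β - sin α * sin β ≤ cos θ := by
    rw [← cos_add]
    exact cos_le_cos_of_le_of_add_le_two_pi hθ hle hadd
  have hinner : inner ℝ x y ≤ (cos θ - cos α * cos β) / (sin α * sin β) := by
    refine inner_le_of_arccos_le_aDist ?_ hx hy h
    rw [le_div_iff₀ hs]
    linarith
  calc θ = arccos (cos θ) := (arccos_cos hθ (by linarith)).symm
    _ ≤ aDist (colatitudeLift α x) (colatitudeLift β y) := by
      refine arccos_le_arccos ?_
      rw [inner_colatitudeLift]
      linarith [(le_div_iff₀' hs).mp hinner]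

open scoped Classical in
theorem IsCode.image_colatitudeLift {C : Finset (EuclideanSpace ℝ (Fin m))}
    (hC : IsCode (omega1 θ φ) C) (hφ : 0 < sin φ) (hθ : 0 ≤ θ) (hle : θ ≤ 2 * φ)
    (hle' : θ ≤ 2 * (π - φ)) : IsCode θ (C.image (colatitudeLift φ)) := by
  simp only [IsCode, Finset.forall_mem_image]
  refine ⟨fun x hx => norm_colatitudeLift φ (hC.1 x hx), fun x hx y hy hne => ?_⟩
  have hxy : x ≠ y := ne_of_apply_ne _ hne
  exact le_aDist_colatitudeLift hφ hφ hθ (by linarith) (by linarith) (hC.1 x hx) (hC.1 y hy)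
    (hC.2 x hx y hy hxy)

theorem sphereMax_le_stripMax (m : ℕ) {ψ : ℝ} (hψφ : ψ ≤ φ) (hθ : 0 < θ) (hle : θ ≤ 2 * φ)
    (hle' : θ ≤ 2 * (π - φ)) : sphereMax m (omega1 θ φ) ≤ stripMax (m + 1) θ ψ φ := by
  classical
  have hφ : 0 < sin φ := sin_pos_of_pos_of_lt_pi (by linarith) (by linarith)
  refine csSup_le' ?_
  rintro _ ⟨C, hC, rfl⟩
  rw [← Finset.card_image_of_injective C (colatitudeLift_injective hφ.ne')]
  refine (hC.image_colatitudeLift hφ hθ.le hle hle').card_le_stripMax hθ ?_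
  simp only [Finset.forall_mem_image]
  intro x _
  rw [aDist_colatitudeLift_north (by linarith) (by linarith)]
  exact ⟨hψφ, le_rfl⟩

end ColatitudeLift

theorem stmt5_general (m : ℕ) {θ ψ φ : ℝ} (hψφ : ψ ≤ φ) (hθ : 0 < θ) (hle : θ ≤ 2 * φ)
    (hle' : θ ≤ 2 * (π - φ)) :
    sphereMax m (omega1 θ φ) ≤ stripMax (m + 1) θ ψ φ ∧
      stripMax (m + 1) θ ψ φ ≤ capMax (m + 1) θ φ :=
  ⟨sphereMax_le_stripMax m hψφ hθ hle hle', stripMax_le_capMax (m + 1) ψ φ hθ⟩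

theorem stmt5 (n : ℕ) (hn : 3 ≤ n) (θ ψ φ : ℝ) (hψ : 0 ≤ ψ) (hψφ : ψ < φ)
    (hφ : φ ≤ Real.pi / 2) (hθ : 0 < θ) (hθ2 : θ ≤ 2 * φ) :
    sphereMax (n - 1) (omega1 θ φ) ≤ stripMax n θ ψ φ ∧ stripMax n θ ψ φ ≤ capMax n θ φ := by
  obtain ⟨m, rfl⟩ := Nat.exists_eq_add_of_le' (show 1 ≤ n by lia)
  exact stmt5_general m hψφ.le hθ hθ2 (by linarith)
end

section
/- Let s ≥ 1, let 0 < v ≤ u ≤ π/(2s), and let θ satisfy u − v ≤ θ ≤ π. Writing ρ(t) := sin(s·t)/sin t, one has cos(su)·cos(sv) + ρ(u)·ρ(v)·(cos θ − cos u · cos v) ≤ cos²(su) + ρ(u)²·(cos θ − cos²u). -/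
/-!
Put `ρ t = sin (s * t) / sin t`. By the addition formulas, the right-hand side of the inequality
minus the left-hand side equals
`(1 - cos (s * (u - v))) - ρ u ^ 2 * (1 - cos (u - v)) + ρ u * (ρ v - ρ u) * (cos (u - v) - cos θ)`.
Everything then follows from `ρ` being nonnegative and decreasing on `(0, π / s]`. The last product
is nonnegative because `v ≤ u`. In half angles, the difference before it is
`2 * sin ((u - v) / 2) ^ 2 * (ρ ((u - v) / 2) ^ 2 - ρ u ^ 2)`, which is nonnegative because
`(u - v) / 2 ≤ u`. Finally, `ρ` is decreasing because
`sin (s * t) * cos t - s * cos (s * t) * sin t`, which has the opposite sign to `ρ'`, vanishes at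
`0` and has derivative `(s ^ 2 - 1) * (sin (s * t) * sin t)`.
-/

open Real Set

/-- The function `ρ t = sin (s * t) / sin t`, which for a positive integer `s` is the Chebyshev
polynomial `U_{s-1}` evaluated at `cos t`. Division by zero gives it the value `0`, not its limit,
at the multiples of `π`. -/
noncomputable def sinRatio (s t : ℝ) : ℝ := sin (s * t) / sin t

section

variable {s t u v b d : ℝ}

theorem sinRatio_mul_sin (ht : sin t ≠ 0) : sinRatio s t * sin t = sin (s * t) :=
  div_mul_cancel₀ _ ht

theorem sinRatio_abs (s t : ℝ) : sinRatio s |t| = sinRatio s t := by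
  rcases abs_choice t with h | h <;> simp [sinRatio, h]

theorem sinRatio_nonneg (hs : 0 ≤ s) (ht : 0 ≤ t) (htπ : t ≤ π) (hst : s * t ≤ π) :
    0 ≤ sinRatio s t :=
  div_nonneg (sin_nonneg_of_nonneg_of_le_pi (mul_nonneg hs ht) hst)
    (sin_nonneg_of_nonneg_of_le_pi ht htπ)

theorem hasDerivAt_sin_const_mul (s t : ℝ) :
    HasDerivAt (fun x ↦ sin (s * x)) (s * cos (s * t)) t := by
  simpa [mul_comm] using ((hasDerivAt_id t).const_mul s).sin

theorem hasDerivAt_cos_const_mul (s t : ℝ) :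
    HasDerivAt (fun x ↦ cos (s * x)) (-(s * sin (s * t))) t := by
  simpa [mul_comm] using ((hasDerivAt_id t).const_mul s).cos

theorem hasDerivAt_sin_mul_cos_sub_mul_cos_mul_sin (s t : ℝ) :
    HasDerivAt (fun x ↦ sin (s * x) * cos x - s * cos (s * x) * sin x)
      ((s ^ 2 - 1) * (sin (s * t) * sin t)) t := by
  have hleft := (hasDerivAt_sin_const_mul s t).fun_mul (hasDerivAt_cos t)
  have hright := ((hasDerivAt_cos_const_mul s t).const_mul s).fun_mul (hasDerivAt_sin t)
  exact (hleft.fun_sub hright).congr_deriv (by ring)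

theorem mul_cos_mul_mul_sin_le (hs : 1 ≤ s) (ht : 0 ≤ t) (hst : s * t ≤ π) :
    s * cos (s * t) * sin t ≤ sin (s * t) * cos t := by
  have hderiv := hasDerivAt_sin_mul_cos_sub_mul_cos_mul_sin s
  have hmono : MonotoneOn (fun x ↦ sin (s * x) * cos x - s * cos (s * x) * sin x) (Icc 0 t) := by
    refine monotoneOn_of_hasDerivWithinAt_nonneg (convex_Icc 0 t)
      (fun x _ ↦ (hderiv x).continuousAt.continuousWithinAt)
      (fun x _ ↦ (hderiv x).hasDerivWithinAt) fun x hx ↦ ?_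
    obtain ⟨hx₀, hxt⟩ := interior_subset hx
    have hsx : s * x ≤ π := (mul_le_mul_of_nonneg_left hxt (by linarith)).trans hst
    have hxsx : x ≤ s * x := le_mul_of_one_le_left hx₀ hs
    exact mul_nonneg (sub_nonneg.2 (one_le_pow₀ hs)) (mul_nonneg
      (sin_nonneg_of_nonneg_of_le_pi (hx₀.trans hxsx) hsx)
      (sin_nonneg_of_nonneg_of_le_pi hx₀ (hxsx.trans hsx)))
  simpa using hmono (left_mem_Icc.2 ht) (right_mem_Icc.2 ht) ht

theorem hasDerivAt_sinRatio (s : ℝ) (ht : sin t ≠ 0) :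
    HasDerivAt (sinRatio s)
      ((s * cos (s * t) * sin t - sin (s * t) * cos t) / sin t ^ 2) t :=
  (hasDerivAt_sin_const_mul s t).div (hasDerivAt_sin t) ht

theorem antitoneOn_sinRatio (hs : 1 ≤ s) (hb : b < π) (hsb : s * b ≤ π) :
    AntitoneOn (sinRatio s) (Ioc 0 b) := by
  have hderiv (x : ℝ) (hx : x ∈ Ioc 0 b) := hasDerivAt_sinRatio s
    (sin_pos_of_pos_of_lt_pi hx.1 (hx.2.trans_lt hb)).ne'
  refine antitoneOn_of_hasDerivWithinAt_nonpos (convex_Ioc 0 b)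
    (fun x hx ↦ (hderiv x hx).continuousAt.continuousWithinAt)
    (fun x hx ↦ (hderiv x (interior_subset hx)).hasDerivWithinAt) fun x hx ↦ ?_
  obtain ⟨hx₀, hxb⟩ := interior_subset hx
  have hsx : s * x ≤ π := (mul_le_mul_of_nonneg_left hxb (by linarith)).trans hsb
  exact div_nonpos_of_nonpos_of_nonneg
    (sub_nonpos.2 (mul_cos_mul_mul_sin_le hs hx₀.le hsx)) (sq_nonneg _)

theorem one_sub_cos_eq_two_mul_sin_half_sq (x : ℝ) : 1 - cos x = 2 * sin (x / 2) ^ 2 := by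
  rw [sin_sq_eq_half_sub, mul_div_cancel₀ x two_ne_zero]
  ring

theorem sinRatio_sq_mul_one_sub_cos_le (hs : 1 ≤ s) (hu : u < π) (hsu : s * u ≤ π)
    (hd : 0 ≤ d) (hdu : d ≤ 2 * u) :
    sinRatio s u ^ 2 * (1 - cos d) ≤ 1 - cos (s * d) := by
  obtain rfl | hd_pos := hd.eq_or_lt
  · simp
  have hhalf_pos : 0 < d / 2 := half_pos hd_pos
  have hhalf_le : d / 2 ≤ u := by linarith
  have hu_pos : 0 < u := hhalf_pos.trans_le hhalf_le
  have hsin : sin (d / 2) ≠ 0 := (sin_pos_of_pos_of_lt_pi hhalf_pos (hhalf_le.trans_lt hu)).ne'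
  have hanti : sinRatio s u ≤ sinRatio s (d / 2) :=
    antitoneOn_sinRatio hs hu hsu ⟨hhalf_pos, hhalf_le⟩ ⟨hu_pos, le_rfl⟩ hhalf_le
  have hnonneg : 0 ≤ sinRatio s u := sinRatio_nonneg (by linarith) hu_pos.le hu.le hsu
  calc sinRatio s u ^ 2 * (1 - cos d)
      = sinRatio s u ^ 2 * (2 * sin (d / 2) ^ 2) := by rw [one_sub_cos_eq_two_mul_sin_half_sq]
    _ ≤ sinRatio s (d / 2) ^ 2 * (2 * sin (d / 2) ^ 2) := by gcongr
    _ = 2 * (sinRatio s (d / 2) * sin (d / 2)) ^ 2 := by ring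
    _ = 1 - cos (s * d) := by
      rw [sinRatio_mul_sin hsin, one_sub_cos_eq_two_mul_sin_half_sq, mul_div_assoc]

theorem cos_mul_mul_cos_mul_sub_sinRatio_mul (s : ℝ) (hu : sin u ≠ 0) (hv : sin v ≠ 0) :
    cos (s * u) * cos (s * v) - sinRatio s u * sinRatio s v * (cos u * cos v) =
      cos (s * (u - v)) - sinRatio s u * sinRatio s v * cos (u - v) := by
  rw [mul_sub, cos_sub, cos_sub, ← sinRatio_mul_sin hu, ← sinRatio_mul_sin hv]
  ring

end

theorem stmt12_general (s u v c : ℝ) (hs : 1 ≤ s) (hv : v ≠ 0) (hvu : |v| ≤ u) (hu : u < π)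
    (hsu : s * u ≤ π) (hc : c ≤ cos (u - v)) :
    cos (s * u) * cos (s * v) + sinRatio s u * sinRatio s v * (c - cos u * cos v) ≤
      cos (s * u) ^ 2 + sinRatio s u ^ 2 * (c - cos u ^ 2) := by
  obtain ⟨hneg_v, hv_le⟩ := abs_le.1 hvu
  have hv_pos : 0 < |v| := abs_pos.2 hv
  have hu_pos : 0 < u := hv_pos.trans_le hvu
  have hsin_u : sin u ≠ 0 := (sin_pos_of_pos_of_lt_pi hu_pos hu).ne'
  have hsin_v : sin v ≠ 0 := by
    rw [ne_eq, sin_eq_zero_iff_of_lt_of_lt (by linarith) (by linarith)]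
    exact hv
  have hanti : sinRatio s u ≤ sinRatio s v := by
    rw [← sinRatio_abs s v]
    exact antitoneOn_sinRatio hs hu hsu ⟨hv_pos, hvu⟩ ⟨hu_pos, le_rfl⟩ hvu
  have hnonneg : 0 ≤ sinRatio s u := sinRatio_nonneg (by linarith) hu_pos.le hu.le hsu
  have hchord : sinRatio s u ^ 2 * (1 - cos (u - v)) ≤ 1 - cos (s * (u - v)) :=
    sinRatio_sq_mul_one_sub_cos_le hs hu hsu (by linarith) (by linarith)
  have hcross : 0 ≤ sinRatio s u * (sinRatio s v - sinRatio s u) * (cos (u - v) - c) :=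
    mul_nonneg (mul_nonneg hnonneg (sub_nonneg.2 hanti)) (sub_nonneg.2 hc)
  have hdiag := cos_mul_mul_cos_mul_sub_sinRatio_mul s hsin_u hsin_u
  have hoff := cos_mul_mul_cos_mul_sub_sinRatio_mul s hsin_u hsin_v
  rw [sub_self, mul_zero, cos_zero] at hdiag
  linear_combination hchord + hcross + hoff - hdiag

theorem stmt12 (s u v θ : ℝ) (hs : 1 ≤ s) (hv : 0 < v) (hvu : v ≤ u)
    (hu : u ≤ Real.pi / (2 * s)) (hθ1 : u - v ≤ θ) (hθ2 : θ ≤ Real.pi) :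
    Real.cos (s * u) * Real.cos (s * v) +
        (Real.sin (s * u) / Real.sin u) * (Real.sin (s * v) / Real.sin v) *
          (Real.cos θ - Real.cos u * Real.cos v) ≤
      Real.cos (s * u) ^ 2 +
        (Real.sin (s * u) / Real.sin u) ^ 2 * (Real.cos θ - Real.cos u ^ 2) := by
  have hsu : u * (2 * s) ≤ π := (le_div_iff₀ (by positivity)).1 hu
  exact stmt12_general s u v (cos θ) hs hv.ne' (by rwa [abs_of_pos hv]) (by nlinarith)
    (by nlinarith) (cos_le_cos_of_nonneg_of_le_pi (sub_nonneg.2 hvu) hθ2 hθ1)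
end
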